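/- For every (m × n)-matrix M over a field K (with columns indexed by Fin n), there exists an invertible upper-triangular (n × n)-matrix V such that the matrix M · V has the distinct pivot property: any two distinct nonzero columns of M · V have distinct pivots. -/

import Mathlib

open Matrix

/-- For a nonzero vector over a finite linearly ordered index set, its pivot is the
largest index at which the vector is nonzero. -/
noncomputable def pivot {K : Type*} [Zero K] {m : Type*} [Fintype m] [LinearOrder m]
    (v : m → K) (hv : v ≠ 0) : m := by
  classical
  refine (Finset.univ.filter fun i => v i ≠ 0).max' ?_
  obtain ⟨i, hi⟩ : ∃ i, v i ≠ 0 := by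
    by_contra h
    push_neg at h
    exact hv (funext fun i => h i)
  exact ⟨i, Finset.mem_filter.mpr ⟨Finset.mem_univ i, hi⟩⟩

/-!
If columns `j < k` of `A` have the same pivot `p`, adding a multiple of column `j` to column `k`
clears the entry of column `k` at `p`, so the pivot of column `k` drops while the other columns do
not change. This operation is right multiplication by an invertible upper-triangular matrix. There
are only finitely many families of pivots, so an invertible upper-triangular `V` for which the
family of pivots of the columns of `M * V` is minimal leaves no coincidence.
-/

section PivotOrBot

variable {R m : Type*} [Zero R] [Fintype m] [LinearOrder m] {v : m → R}

open Classical in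
/-- The pivot of an arbitrary vector, equal to `⊥` for the zero vector. Taking values in
`WithBot m` makes it total, so that the pivots of all columns of a matrix can be compared. -/
noncomputable def pivotOrBot (v : m → R) : WithBot m :=
  (Finset.univ.filter fun i => v i ≠ 0).max

theorem coe_pivot (hv : v ≠ 0) : (↑(pivot v hv) : WithBot m) = pivotOrBot v :=
  Finset.coe_max' _

theorem pivotOrBot_lt_coe_iff {p : m} : pivotOrBot v < p ↔ ∀ i, p ≤ i → v i = 0 := by
  rw [pivotOrBot, Finset.max_eq_sup_coe, Finset.sup_lt_iff (WithBot.bot_lt_coe p)]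
  simp only [Finset.mem_filter_univ, ← not_le, WithBot.coe_le_coe, not_imp_not]

theorem apply_pivot_ne_zero (hv : v ≠ 0) : v (pivot v hv) ≠ 0 := by
  classical
  exact (Finset.mem_filter.mp (Finset.mem_of_max (coe_pivot hv).symm)).2

theorem apply_eq_zero_of_pivot_lt (hv : v ≠ 0) {i : m} (hi : pivot v hv < i) : v i = 0 :=
  pivotOrBot_lt_coe_iff.mp (coe_pivot hv ▸ WithBot.coe_lt_coe.mpr hi) i le_rfl

end PivotOrBot

/-- The distinct pivot property: distinct nonzero columns have distinct pivots. Columns are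
distinguished by their indices, so two equal nonzero columns violate it. -/
def HasDistinctPivots {R m n : Type*} [Zero R] [Fintype m] [LinearOrder m]
    (A : Matrix m n R) : Prop :=
  ∀ j k, j ≠ k → ∀ (hj : Aᵀ j ≠ 0) (hk : Aᵀ k ≠ 0), pivot (Aᵀ j) hj ≠ pivot (Aᵀ k) hk

section ElementaryMatrix

variable {R m n : Type*} [DecidableEq n] [Fintype n]

theorem isUnit_one_add_single [Ring R] {j k : n} (hjk : j ≠ k) (c : R) :
    IsUnit (1 + single j k c) := by
  have sq_eq_zero : single j k c ^ 2 = 0 := by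
    rw [sq, single_mul_single_of_ne c j k j hjk.symm]
  exact IsNilpotent.isUnit_one_add ⟨2, sq_eq_zero⟩

theorem mul_one_add_single [NonAssocSemiring R] (A : Matrix m n R) (j k : n) (c : R) :
    A * (1 + single j k c) = A.updateCol k (Aᵀ k + MulOpposite.op c • Aᵀ j) := by
  rw [Matrix.mul_add, Matrix.mul_one]
  ext i l
  obtain rfl | hlk := eq_or_ne l k
  · simp
  · simp [hlk]

end ElementaryMatrix

section DivisionRing

variable {K m n : Type*} [DivisionRing K] [Fintype m] [LinearOrder m]

theorem exists_pivotOrBot_add_smul_lt {u v : m → K} (hu : u ≠ 0) (hv : v ≠ 0)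
    (huv : pivot u hu = pivot v hv) :
    ∃ c : K, pivotOrBot (v + MulOpposite.op c • u) < pivotOrBot v := by
  have hup : u (pivot v hv) ≠ 0 := huv ▸ apply_pivot_ne_zero hu
  refine ⟨-((u (pivot v hv))⁻¹ * v (pivot v hv)), ?_⟩
  rw [← coe_pivot hv, pivotOrBot_lt_coe_iff]
  intro i hi
  obtain rfl | hlt := hi.eq_or_lt
  · simp [hup]
  · simp [apply_eq_zero_of_pivot_lt hu (huv.trans_lt hlt), apply_eq_zero_of_pivot_lt hv hlt]

variable [Fintype n] [LinearOrder n]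

theorem exists_isUpperTriangular_mul_pivotOrBot_lt {A : Matrix m n K}
    (hA : ¬HasDistinctPivots A) :
    ∃ T : Matrix n n K, IsUnit T ∧ T.IsUpperTriangular ∧
      (fun l => pivotOrBot ((A * T)ᵀ l)) < fun l => pivotOrBot (Aᵀ l) := by
  obtain ⟨j, k, hjk, hj, hk, hpivot⟩ :
      ∃ j k, j < k ∧ ∃ (hj : Aᵀ j ≠ 0) (hk : Aᵀ k ≠ 0), pivot (Aᵀ j) hj = pivot (Aᵀ k) hk := by
    simp only [HasDistinctPivots, not_forall, not_not] at hA
    obtain ⟨j, k, hne, hj, hk, hpivot⟩ := hA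
    obtain hlt | hgt := hne.lt_or_gt
    · exact ⟨j, k, hlt, hj, hk, hpivot⟩
    · exact ⟨k, j, hgt, hk, hj, hpivot.symm⟩
  obtain ⟨c, hc⟩ := exists_pivotOrBot_add_smul_lt hj hk hpivot
  refine ⟨1 + single j k c, isUnit_one_add_single hjk.ne c,
    blockTriangular_one.add (blockTriangular_single hjk.le c), ?_⟩
  have pivots_eq : (fun l => pivotOrBot ((A * (1 + single j k c))ᵀ l)) =
      Function.update (fun l => pivotOrBot (Aᵀ l)) k
        (pivotOrBot (Aᵀ k + MulOpposite.op c • Aᵀ j)) := by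
    rw [mul_one_add_single, ← updateRow_transpose]
    exact Function.comp_update pivotOrBot Aᵀ k _
  rw [pivots_eq]
  exact update_lt_self_iff.mpr hc

theorem exists_upperTriangular_mul_distinct_pivots_general (M : Matrix m n K) :
    ∃ V : Matrix n n K, IsUnit V ∧ V.IsUpperTriangular ∧ HasDistinctPivots (M * V) := by
  obtain ⟨V, ⟨V_unit, V_upper⟩, V_min⟩ := exists_minimalFor_of_wellFoundedLT
    (fun V : Matrix n n K => IsUnit V ∧ V.IsUpperTriangular)
    (fun V l => pivotOrBot ((M * V)ᵀ l)) ⟨1, isUnit_one, blockTriangular_one⟩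
  refine ⟨V, V_unit, V_upper, ?_⟩
  by_contra hV
  obtain ⟨T, T_unit, T_upper, hlt⟩ := exists_isUpperTriangular_mul_pivotOrBot_lt hV
  rw [Matrix.mul_assoc] at hlt
  exact hlt.not_ge (V_min ⟨V_unit.mul T_unit, V_upper.mul T_upper⟩ hlt.le)

end DivisionRing

/-- Every matrix `M` over a field can be brought to a matrix with the
distinct pivot property by right-multiplication with an invertible upper-triangular
matrix `V`. -/
theorem exists_upperTriangular_mul_distinct_pivots {K : Type*} [Field K] {m n : ℕ}
    (M : Matrix (Fin m) (Fin n) K) :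
    ∃ V : Matrix (Fin n) (Fin n) K, IsUnit V ∧ V.BlockTriangular id ∧
      ∀ j k, j ≠ k → ∀ (hj : (M * V)ᵀ j ≠ 0) (hk : (M * V)ᵀ k ≠ 0),
        pivot ((M * V)ᵀ j) hj ≠ pivot ((M * V)ᵀ k) hk :=
  exists_upperTriangular_mul_distinct_pivots_general M
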